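/- Every A ∈ SL(2,ℤ) can be written in the form A = ε·M(c_1, …, c_k) for some sign ε ∈ {1, −1} and positive integers c_1, …, c_k. Moreover, if k is the smallest integer for which such a presentation of A exists, then the tuple (c_1, …, c_k) is unique: whenever ε·M(c_1, …, c_k) = ε'·M(c'_1, …, c'_k) = A with ε, ε' ∈ {1, −1}, all c_i ≥ 1 and all c'_i ≥ 1, one has c_i = c'_i for all i. -/

import Mathlib

/-- `M(c₁, …, c_n) = [[c₁,−1],[1,0]] ⋯ [[c_n,−1],[1,0]]`. -/
def Mneg (cs : List ℤ) : Matrix (Fin 2) (Fin 2) ℤ :=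
  (cs.map fun c => !![c, -1; 1, 0]).prod

/-!
The matrix `M(1)` has order 3 up to sign and fixes the form `Q = 2x² + 2xy + 2y²`; the form
`A Q Aᵀ` records the image under `A` of the elliptic fixed point of `M(1)`. A shortest word contains
none of the factors `1,1,1`, `x,1,b` and `x,1,1,b` (with `x, b ≥ 2`), because each can be shortened,
so it is `1ᵃ k 1ᵉ` with all letters of `k` at least 2 and `a, e ≤ 2`. The suffix `1ᵉ` does not
change `A Q Aᵀ = [[p, r], [r, q]]`. The conditions `q < r`, `p < r` and `r < 0` exclude each other
and `M(1)` permutes them cyclically, while a nonempty `k` gives `q < r`; so the form determines `a`.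
The first letter `x` of `k` is recovered from `x - 1 < r / q < x`. Hence the form determines `a` and
`k`, and the length then determines `e`.
-/

section Words

lemma Mneg_nil : Mneg [] = 1 := rfl

lemma Mneg_cons (x : ℤ) (t : List ℤ) : Mneg (x :: t) = !![x, -1; 1, 0] * Mneg t := by
  simp [Mneg]

lemma Mneg_append (s t : List ℤ) : Mneg (s ++ t) = Mneg s * Mneg t := by
  simp [Mneg]

lemma det_Mneg (c : List ℤ) : (Mneg c).det = 1 := by
  induction c with
  | nil => simp [Mneg_nil]
  | cons x t ih => rw [Mneg_cons, Matrix.det_mul, ih, Matrix.det_fin_two_of]; ring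

lemma isUnit_Mneg (c : List ℤ) : IsUnit (Mneg c) := by
  simp [Matrix.isUnit_iff_isUnit_det, det_Mneg]

lemma Mneg_one_one_one_cons (t : List ℤ) : Mneg (1 :: 1 :: 1 :: t) = -Mneg t := by
  have h : !![(1 : ℤ), -1; 1, 0] * !![1, -1; 1, 0] * !![1, -1; 1, 0] = -1 := by decide
  simp only [Mneg_cons, ← mul_assoc, h, neg_one_mul]

lemma Mneg_cons_one_cons (x b : ℤ) (t : List ℤ) :
    Mneg (x :: 1 :: b :: t) = Mneg ((x - 1) :: (b - 1) :: t) := by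
  have h : !![x, -1; 1, 0] * !![1, -1; 1, 0] * !![b, -1; 1, 0] =
      !![x - 1, -1; 1, 0] * !![b - 1, -1; 1, 0] := by
    simp only [Matrix.mul_fin_two]
    ring_nf
  simp only [Mneg_cons, ← mul_assoc, h]

lemma Mneg_cons_one_one_cons (x b : ℤ) (t : List ℤ) :
    Mneg (x :: 1 :: 1 :: b :: t) = -Mneg ((x + b - 1) :: t) := by
  have h : !![x, -1; 1, 0] * !![1, -1; 1, 0] * !![1, -1; 1, 0] * !![b, -1; 1, 0] =
      -!![x + b - 1, -1; 1, 0] := by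
    simp only [Matrix.mul_fin_two, Matrix.neg_of, Matrix.neg_cons, Matrix.neg_empty]
    ring_nf
  simp only [Mneg_cons, ← mul_assoc, h, neg_mul]

end Words

section Presentations

/-- The word `c` has positive letters and represents the matrix `A` up to sign. The sign is a unit
of `ℤ`, so that signs can be multiplied and inverted. -/
structure Presents (c : List ℤ) (A : Matrix (Fin 2) (Fin 2) ℤ) : Prop where
  pos : ∀ x ∈ c, 1 ≤ x
  eq_smul : ∃ ε : ℤˣ, A = ε • Mneg c

variable {A B : Matrix (Fin 2) (Fin 2) ℤ} {c d t : List ℤ} {x b ε : ℤ}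

lemma Presents.of_sign (hε : ε = 1 ∨ ε = -1) (hc : ∀ x ∈ c, 1 ≤ x) (h : A = ε • Mneg c) :
    Presents c A := by
  obtain ⟨u, rfl⟩ := Int.isUnit_iff.2 hε
  exact ⟨hc, u, h⟩

lemma Presents.exists_sign (h : Presents c A) :
    ∃ ε : ℤ, (ε = 1 ∨ ε = -1) ∧ A = ε • Mneg c := by
  obtain ⟨-, ε, h⟩ := h
  exact ⟨ε, Int.isUnit_iff.1 ε.isUnit, h⟩

lemma Presents.of_eq (hc : ∀ x ∈ c, 1 ≤ x) (h : A = Mneg c) : Presents c A :=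
  ⟨hc, 1, by rw [h, one_smul]⟩

lemma Presents.of_eq_neg (hc : ∀ x ∈ c, 1 ≤ x) (h : A = -Mneg c) : Presents c A :=
  ⟨hc, -1, by rw [h, Units.neg_smul, one_smul]⟩

lemma Presents.trans (hd : Presents d (Mneg c)) (hc : Presents c A) : Presents d A := by
  obtain ⟨hpos, δ, hδ⟩ := hd
  obtain ⟨-, ε, rfl⟩ := hc
  exact ⟨hpos, ε * δ, by rw [hδ, smul_smul]⟩

lemma Presents.mul (hc : Presents c A) (hd : Presents d B) : Presents (c ++ d) (A * B) := by
  obtain ⟨hcpos, ε, rfl⟩ := hc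
  obtain ⟨hdpos, δ, rfl⟩ := hd
  refine ⟨List.forall_mem_append.2 ⟨hcpos, hdpos⟩, ε * δ, ?_⟩
  rw [Mneg_append, smul_mul_smul_comm]

open Matrix ModularGroup in
theorem exists_presents (g : SpecialLinearGroup (Fin 2) ℤ) : ∃ c, Presents c g.1 := by
  have hg : g ∈ Subgroup.closure {S, T} := by simp [SpecialLinearGroup.SL2Z_generators]
  -- The words come from `S = M(0)`, `T M(1) = M(2)`, `T⁻¹ = S M(1)⁻¹`, `M(1)³ = -1` and
  -- `M(1, 1, 2) = M(0, 1)`.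
  induction hg using Subgroup.closure_induction'' with
  | mem y hy =>
    rcases hy with rfl | rfl
    · exact ⟨[1, 1, 2, 1, 1], .of_eq_neg (by simp) (by decide)⟩
    · exact ⟨[2, 1, 1], .of_eq_neg (by simp) (by decide)⟩
  | inv_mem y hy =>
    rcases hy with rfl | rfl
    · exact ⟨[1, 1, 2, 1, 1], .of_eq (by simp) (by decide)⟩
    · exact ⟨[1, 1, 2, 1], .of_eq_neg (by simp) (by decide)⟩
  | one => exact ⟨[], .of_eq (by simp) (by simp [Mneg_nil])⟩
  | mul y z _ _ hy hz =>
    obtain ⟨c, hc⟩ := hy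
    obtain ⟨d, hd⟩ := hz
    exact ⟨c ++ d, by simpa using hc.mul hd⟩

/-- A word with positive letters that is as short as any word with positive letters representing the
same matrix up to sign. -/
structure IsShortest (c : List ℤ) : Prop where
  pos : ∀ x ∈ c, 1 ≤ x
  length_le : ∀ d, Presents d (Mneg c) → c.length ≤ d.length

lemma Presents.isShortest (hc : Presents c A) (h : ∀ d, Presents d A → c.length ≤ d.length) :
    IsShortest c :=
  ⟨hc.pos, fun d hd => h d (hd.trans hc)⟩

lemma IsShortest.tail (h : IsShortest (x :: t)) : IsShortest t := by
  obtain ⟨hx, ht⟩ := List.forall_mem_cons.1 h.pos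
  refine ⟨ht, fun d hd => ?_⟩
  have hxd : Presents ([x] ++ d) (Mneg ([x] ++ t)) := by
    rw [Mneg_append]
    exact (Presents.of_eq (by simpa using hx) rfl).mul hd
  simpa using h.length_le _ hxd

lemma not_isShortest_one_one_one_cons : ¬ IsShortest (1 :: 1 :: 1 :: t) := by
  intro h
  have ht : Presents t (Mneg (1 :: 1 :: 1 :: t)) :=
    .of_eq_neg h.tail.tail.tail.pos (Mneg_one_one_one_cons t)
  have := h.length_le t ht
  simp only [List.length_cons] at this
  lia

lemma not_isShortest_cons_one_cons (hx : 2 ≤ x) (hb : 2 ≤ b) :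
    ¬ IsShortest (x :: 1 :: b :: t) := by
  intro h
  have hpos : ∀ y ∈ (x - 1) :: (b - 1) :: t, 1 ≤ y := by
    simp only [List.forall_mem_cons]
    exact ⟨by lia, by lia, h.tail.tail.tail.pos⟩
  simpa using h.length_le _ (.of_eq hpos (Mneg_cons_one_cons x b t))

lemma not_isShortest_cons_one_one_cons : ¬ IsShortest (x :: 1 :: 1 :: b :: t) := by
  intro h
  have hpos : ∀ y ∈ (x + b - 1) :: t, 1 ≤ y := by
    have hx := h.pos x (by simp)
    have hb := h.pos b (by simp)
    exact List.forall_mem_cons.2 ⟨by lia, h.tail.tail.tail.tail.pos⟩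
  have := h.length_le _ (.of_eq_neg hpos (Mneg_cons_one_one_cons x b t))
  simp only [List.length_cons] at this
  lia

end Presentations

section NormalWords

open List (replicate)

/-- The normal form `1ᵃ k 1ᵉ` of shortest words, where all letters of `k` are at least 2 and
`a, e ≤ 2`. For empty `k` all the ones are counted in `e`. -/
def IsNormalWord (c : List ℤ) : Prop :=
  ∃ (a e : ℕ) (k : List ℤ), a < 3 ∧ e < 3 ∧ (∀ x ∈ k, 2 ≤ x) ∧ (k = [] → a = 0) ∧
    c = replicate a 1 ++ k ++ replicate e 1

theorem IsShortest.isNormalWord {c : List ℤ} (h : IsShortest c) : IsNormalWord c := by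
  induction c with
  | nil => exact ⟨0, 0, [], by simp⟩
  | cons x t ih =>
    obtain ⟨a, e, k, ha, he, hk, hak, rfl⟩ := ih h.tail
    obtain rfl | hx : x = 1 ∨ 2 ≤ x := by
      have := h.pos x (by simp)
      lia
    · rcases k with _ | ⟨b, k⟩
      · obtain rfl : a = 0 := hak rfl
        have he' : e ≠ 2 := by
          rintro rfl
          exact not_isShortest_one_one_one_cons h
        exact ⟨0, e + 1, [], by simp, by lia, by simp, by simp, by simp [List.replicate_succ]⟩
      · have ha' : a ≠ 2 := by
          rintro rfl
          exact not_isShortest_one_one_one_cons h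
        exact ⟨a + 1, e, b :: k, by lia, he, hk, by simp, by simp [List.replicate_succ]⟩
    · obtain rfl : a = 0 := by
        rcases k with _ | ⟨b, k⟩
        · exact hak rfl
        · have hb : 2 ≤ b := hk b (by simp)
          interval_cases a
          · rfl
          · exact absurd h (not_isShortest_cons_one_cons hx hb)
          · exact absurd h not_isShortest_cons_one_one_cons
      exact ⟨0, e, x :: k, ha, he, List.forall_mem_cons.2 ⟨hx, hk⟩, by simp, by simp⟩

end NormalWords

section Gram

open scoped Matrix

/-- The Gram matrix `A Q Aᵀ` of the rows of `A` for the form `Q = 2x² + 2xy + 2y²`, which is twice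
the norm form of the Eisenstein integers. -/
def eisensteinGram (A : Matrix (Fin 2) (Fin 2) ℤ) : Matrix (Fin 2) (Fin 2) ℤ :=
  A * !![2, 1; 1, 2] * Aᵀ

lemma eisensteinGram_one : eisensteinGram 1 = !![2, 1; 1, 2] := by
  simp [eisensteinGram]

lemma eisensteinGram_mul (A B : Matrix (Fin 2) (Fin 2) ℤ) :
    eisensteinGram (A * B) = A * eisensteinGram B * Aᵀ := by
  simp only [eisensteinGram, Matrix.transpose_mul, mul_assoc]

lemma eisensteinGram_units_smul (ε : ℤˣ) (A : Matrix (Fin 2) (Fin 2) ℤ) :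
    eisensteinGram (ε • A) = eisensteinGram A := by
  rcases Int.units_eq_one_or ε with rfl | rfl <;> simp [eisensteinGram]

lemma eisensteinGram_mul_right_inj {A B C : Matrix (Fin 2) (Fin 2) ℤ} (hA : IsUnit A) :
    eisensteinGram (A * B) = eisensteinGram (A * C) ↔ eisensteinGram B = eisensteinGram C := by
  have hAt : IsUnit Aᵀ := (Matrix.isUnit_transpose A).2 hA
  rw [eisensteinGram_mul, eisensteinGram_mul, hAt.mul_left_inj, hA.mul_right_inj]

lemma isSymm_eisensteinGram (A : Matrix (Fin 2) (Fin 2) ℤ) : (eisensteinGram A).IsSymm := by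
  have hQ : (!![2, 1; 1, 2] : Matrix (Fin 2) (Fin 2) ℤ)ᵀ = !![2, 1; 1, 2] := by decide
  simp only [Matrix.IsSymm, eisensteinGram, Matrix.transpose_mul, Matrix.transpose_transpose, hQ,
    mul_assoc]

lemma eisensteinGram_diag_mul {A : Matrix (Fin 2) (Fin 2) ℤ} (hA : A.det = 1) :
    eisensteinGram A 0 0 * eisensteinGram A 1 1 = eisensteinGram A 0 1 ^ 2 + 3 := by
  have hdet : (eisensteinGram A).det = 3 := by
    simp [eisensteinGram, hA, Matrix.det_fin_two]
  rw [Matrix.det_fin_two, (isSymm_eisensteinGram A).apply 0 1] at hdet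
  linear_combination hdet

lemma eisensteinGram_mul_Mneg_replicate_one (A : Matrix (Fin 2) (Fin 2) ℤ) (e : ℕ) :
    eisensteinGram (A * Mneg (List.replicate e 1)) = eisensteinGram A := by
  have h : eisensteinGram (Mneg (List.replicate e 1)) = !![2, 1; 1, 2] := by
    induction e with
    | zero => exact eisensteinGram_one
    | succ e ih =>
      rw [List.replicate_succ, Mneg_cons, eisensteinGram_mul, ih]
      decide
  rw [eisensteinGram_mul, h, eisensteinGram]

section Cons

variable (x : ℤ) (t : List ℤ)

lemma eisensteinGram_Mneg_cons : eisensteinGram (Mneg (x :: t)) =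
    !![x ^ 2 * eisensteinGram (Mneg t) 0 0 - 2 * x * eisensteinGram (Mneg t) 0 1 +
        eisensteinGram (Mneg t) 1 1,
      x * eisensteinGram (Mneg t) 0 0 - eisensteinGram (Mneg t) 0 1;
      x * eisensteinGram (Mneg t) 0 0 - eisensteinGram (Mneg t) 0 1,
      eisensteinGram (Mneg t) 0 0] := by
  have htranspose : !![x, -1; 1, 0]ᵀ = !![x, 1; -1, 0] := Matrix.eta_fin_two _
  conv_lhs =>
    rw [Mneg_cons, eisensteinGram_mul, htranspose, Matrix.eta_fin_two (eisensteinGram (Mneg t)),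
      (isSymm_eisensteinGram _).apply 0 1, Matrix.mul_fin_two, Matrix.mul_fin_two]
  ring_nf

lemma eisensteinGram_Mneg_cons_zero_zero : eisensteinGram (Mneg (x :: t)) 0 0 =
    x ^ 2 * eisensteinGram (Mneg t) 0 0 - 2 * x * eisensteinGram (Mneg t) 0 1 +
      eisensteinGram (Mneg t) 1 1 :=
  congr_fun₂ (eisensteinGram_Mneg_cons x t) 0 0

lemma eisensteinGram_Mneg_cons_zero_one : eisensteinGram (Mneg (x :: t)) 0 1 =
    x * eisensteinGram (Mneg t) 0 0 - eisensteinGram (Mneg t) 0 1 :=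
  congr_fun₂ (eisensteinGram_Mneg_cons x t) 0 1

lemma eisensteinGram_Mneg_cons_one_one :
    eisensteinGram (Mneg (x :: t)) 1 1 = eisensteinGram (Mneg t) 0 0 :=
  congr_fun₂ (eisensteinGram_Mneg_cons x t) 1 1

end Cons

end Gram

section Uniqueness

open List (replicate)

variable {k k' : List ℤ}

lemma eisensteinGram_Mneg_bounds (hk : ∀ x ∈ k, 2 ≤ x) :
    0 < eisensteinGram (Mneg k) 0 1 ∧
      eisensteinGram (Mneg k) 0 1 < eisensteinGram (Mneg k) 0 0 := by
  induction k with
  | nil => simp [Mneg_nil, eisensteinGram_one]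
  | cons x t ih =>
    obtain ⟨hx, ht⟩ := List.forall_mem_cons.1 hk
    obtain ⟨hpos, hlt⟩ := ih ht
    have hdisc := eisensteinGram_diag_mul (det_Mneg (x :: t))
    rw [eisensteinGram_Mneg_cons_one_one] at hdisc
    have hstep : eisensteinGram (Mneg t) 0 0 < eisensteinGram (Mneg (x :: t)) 0 1 := by
      rw [eisensteinGram_Mneg_cons_zero_one]
      nlinarith
    exact ⟨by lia, by nlinarith⟩

lemma eisensteinGram_Mneg_one_one_lt (hk : ∀ x ∈ k, 2 ≤ x) (hne : k ≠ []) :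
    eisensteinGram (Mneg k) 1 1 < eisensteinGram (Mneg k) 0 1 := by
  obtain ⟨x, t, rfl⟩ := List.exists_cons_of_ne_nil hne
  obtain ⟨hx, ht⟩ := List.forall_mem_cons.1 hk
  obtain ⟨hpos, hlt⟩ := eisensteinGram_Mneg_bounds ht
  rw [eisensteinGram_Mneg_cons_one_one, eisensteinGram_Mneg_cons_zero_one]
  nlinarith

lemma head_eq_of_eisensteinGram_eq {x x' : ℤ} {t t' : List ℤ} (ht : ∀ y ∈ t, 2 ≤ y)
    (ht' : ∀ y ∈ t', 2 ≤ y)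
    (h : eisensteinGram (Mneg (x :: t)) = eisensteinGram (Mneg (x' :: t'))) : x = x' := by
  have hq := congr_fun₂ h 1 1
  have hr := congr_fun₂ h 0 1
  simp only [eisensteinGram_Mneg_cons_one_one, eisensteinGram_Mneg_cons_zero_one] at hq hr
  obtain ⟨hpos, hlt⟩ := eisensteinGram_Mneg_bounds ht
  obtain ⟨hpos', hlt'⟩ := eisensteinGram_Mneg_bounds ht'
  rw [hq] at hr hlt
  rcases lt_trichotomy x x' with hxx | hxx | hxx
  · nlinarith
  · exact hxx
  · nlinarith

theorem eq_of_eisensteinGram_eq (hk : ∀ x ∈ k, 2 ≤ x) (hk' : ∀ x ∈ k', 2 ≤ x)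
    (h : eisensteinGram (Mneg k) = eisensteinGram (Mneg k')) : k = k' := by
  have nil_of_eq : ∀ {l : List ℤ}, (∀ x ∈ l, 2 ≤ x) →
      eisensteinGram (Mneg l) = eisensteinGram (Mneg []) → l = [] := by
    intro l hl hG
    by_contra hne
    simpa [hG, Mneg_nil, eisensteinGram_one] using eisensteinGram_Mneg_one_one_lt hl hne
  induction k generalizing k' with
  | nil => exact (nil_of_eq hk' h.symm).symm
  | cons x t ih =>
    rcases k' with _ | ⟨x', t'⟩
    · exact nil_of_eq hk h
    obtain ⟨-, ht⟩ := List.forall_mem_cons.1 hk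
    obtain ⟨-, ht'⟩ := List.forall_mem_cons.1 hk'
    obtain rfl := head_eq_of_eisensteinGram_eq ht ht' h
    have htail : eisensteinGram (Mneg t) = eisensteinGram (Mneg t') := by
      rwa [← eisensteinGram_mul_right_inj (isUnit_Mneg [x]), ← Mneg_append, ← Mneg_append]
    rw [ih ht ht' htail]

lemma eq_zero_of_eisensteinGram_eq_replicate_append {d : ℕ} (hd : d < 3) (hk : ∀ x ∈ k, 2 ≤ x)
    (hk' : ∀ x ∈ k', 2 ≤ x) (hne : k' ≠ [])
    (h : eisensteinGram (Mneg k) = eisensteinGram (Mneg (replicate d 1 ++ k'))) : d = 0 := by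
  obtain ⟨hpos, hlt⟩ := eisensteinGram_Mneg_bounds hk
  have hlt' := eisensteinGram_Mneg_one_one_lt hk' hne
  rw [h] at hpos hlt
  interval_cases d
  · rfl
  · simp only [List.replicate_succ, List.replicate_zero, List.cons_append, List.nil_append,
      eisensteinGram_Mneg_cons_zero_zero, eisensteinGram_Mneg_cons_zero_one] at hlt
    lia
  · simp only [List.replicate_succ, List.replicate_zero, List.cons_append, List.nil_append,
      eisensteinGram_Mneg_cons_zero_zero, eisensteinGram_Mneg_cons_zero_one] at hpos
    lia

theorem eq_and_eq_of_eisensteinGram_replicate_append_eq {a a' : ℕ} (ha : a < 3) (ha' : a' < 3)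
    (hk : ∀ x ∈ k, 2 ≤ x) (hk' : ∀ x ∈ k', 2 ≤ x) (hak : k = [] → a = 0) (hak' : k' = [] → a' = 0)
    (h : eisensteinGram (Mneg (replicate a 1 ++ k)) =
      eisensteinGram (Mneg (replicate a' 1 ++ k'))) : a = a' ∧ k = k' := by
  wlog hle : a ≤ a' generalizing a a' k k'
  · obtain ⟨haa, hkk⟩ := this ha' ha hk' hk hak' hak h.symm (by lia)
    exact ⟨haa.symm, hkk.symm⟩
  obtain ⟨d, rfl⟩ := Nat.exists_eq_add_of_le hle
  rw [List.replicate_add, List.append_assoc, Mneg_append, Mneg_append _ (_ ++ _),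
    eisensteinGram_mul_right_inj (isUnit_Mneg _)] at h
  obtain rfl : d = 0 := by
    by_cases hne : k' = []
    · have := hak' hne
      lia
    · exact eq_zero_of_eisensteinGram_eq_replicate_append (by lia) hk hk' hne h
  exact ⟨rfl, eq_of_eisensteinGram_eq hk hk' h⟩

theorem IsNormalWord.eq_of_eisensteinGram_eq {c c' : List ℤ} (hc : IsNormalWord c)
    (hc' : IsNormalWord c') (hlen : c.length = c'.length)
    (h : eisensteinGram (Mneg c) = eisensteinGram (Mneg c')) : c = c' := by
  obtain ⟨a, e, k, ha, -, hk, hak, rfl⟩ := hc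
  obtain ⟨a', e', k', ha', -, hk', hak', rfl⟩ := hc'
  rw [Mneg_append _ (replicate e 1), Mneg_append _ (replicate e' 1),
    eisensteinGram_mul_Mneg_replicate_one, eisensteinGram_mul_Mneg_replicate_one] at h
  obtain ⟨rfl, rfl⟩ :=
    eq_and_eq_of_eisensteinGram_replicate_append_eq ha ha' hk hk' hak hak' h
  obtain rfl : e = e' := by simpa using hlen
  rfl

end Uniqueness

lemma Presents.eisensteinGram_eq {A : Matrix (Fin 2) (Fin 2) ℤ} {c : List ℤ} (h : Presents c A) :
    eisensteinGram A = eisensteinGram (Mneg c) := by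
  obtain ⟨-, ε, rfl⟩ := h
  exact eisensteinGram_units_smul ε _

theorem Presents.eq_of_forall_length_le {A : Matrix (Fin 2) (Fin 2) ℤ} {c c' : List ℤ}
    (hc : Presents c A) (hc' : Presents c' A) (hlen : c.length = c'.length)
    (hmin : ∀ d, Presents d A → c.length ≤ d.length) : c = c' := by
  have hred : IsNormalWord c := (hc.isShortest hmin).isNormalWord
  have hred' : IsNormalWord c' := (hc'.isShortest (hlen ▸ hmin)).isNormalWord
  exact hred.eq_of_eisensteinGram_eq hred' hlen
    (hc.eisensteinGram_eq.symm.trans hc'.eisensteinGram_eq)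

/-- every `A ∈ SL(2,ℤ)` can be written as
`A = ε·M(c₁, …, c_k)` with `ε = ±1` and positive integers `c_i`; moreover the
tuple `(c₁, …, c_k)` of a presentation of minimal length `k` is unique. -/
theorem stmt18 :
    (∀ A : Matrix (Fin 2) (Fin 2) ℤ, A.det = 1 →
      ∃ (ε : ℤ) (c : List ℤ), (ε = 1 ∨ ε = -1) ∧ (∀ x ∈ c, 1 ≤ x) ∧
        A = ε • Mneg c) ∧
    (∀ A : Matrix (Fin 2) (Fin 2) ℤ, A.det = 1 →
      ∀ (ε ε' : ℤ) (c c' : List ℤ),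
        (ε = 1 ∨ ε = -1) → (ε' = 1 ∨ ε' = -1) →
        (∀ x ∈ c, 1 ≤ x) → (∀ x ∈ c', 1 ≤ x) →
        A = ε • Mneg c → A = ε' • Mneg c' →
        c.length = c'.length →
        (∀ (δ : ℤ) (d : List ℤ), (δ = 1 ∨ δ = -1) → (∀ x ∈ d, 1 ≤ x) →
          A = δ • Mneg d → c.length ≤ d.length) →
        c = c') := by
  refine ⟨fun A hA => ?_, fun A _ ε ε' c c' hε hε' hc hc' h h' hlen hmin => ?_⟩
  · obtain ⟨c, hc⟩ := exists_presents ⟨A, hA⟩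
    obtain ⟨ε, hε, h⟩ := hc.exists_sign
    exact ⟨ε, c, hε, hc.pos, h⟩
  · have hpres : Presents c A := .of_sign hε hc h
    have hpres' : Presents c' A := .of_sign hε' hc' h'
    refine hpres.eq_of_forall_length_le hpres' hlen fun d hd => ?_
    obtain ⟨δ, hδ, hA⟩ := hd.exists_sign
    exact hmin δ d hδ hd.pos hA
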